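/- For every 0 ≤ q ≤ d, the natural P-equivariant map ind_{P_0Z}^P(V_q) → ⊕_{η∈BT_q} V_η is an isomorphism of smooth P-representations, where V_q := ⊕_{J⊆{1,…,d}, |J|=q} ⊕_{n_0 ∈ N_0/∩_{j∈J}φ_jN_0φ_j⁻¹} V_{n_0·η_J} is a P_0Z-subrepresentation of ⊕_{η∈BT_q} V_η on which Z acts trivially. -/

import Mathlib

set_option synthInstance.maxHeartbeats 1000000

noncomputable section

open scoped Classical Pointwise DirectSum

variable (p : ℕ) [Fact (Nat.Prime p)] (d : ℕ)

/-- The vector space `ℚ_p^{d+1}`. -/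
abbrev Vsp := Fin (d + 1) → ℚ_[p]

/-- The general linear group `GL_{d+1}(ℚ_p)`. -/
abbrev GL' := (Matrix (Fin (d + 1)) (Fin (d + 1)) ℚ_[p])ˣ

/-- A `ℤ_p`-lattice in `ℚ_p^{d+1}`: a finitely generated `ℤ_p`-submodule which spans
`ℚ_p^{d+1}` over `ℚ_p`. -/
def IsLattice (L : Submodule ℤ_[p] (Vsp p d)) : Prop :=
  L.FG ∧ Submodule.span ℚ_[p] (L : Set (Vsp p d)) = ⊤

/-- The type of lattices. -/
def LatZ := {L : Submodule ℤ_[p] (Vsp p d) // IsLattice p d L}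

/-- Scalar multiplication by `c ∈ ℚ_p` as a `ℤ_p`-linear endomorphism of `ℚ_p^{d+1}`. -/
def scalarMap (c : ℚ_[p]) : Vsp p d →ₗ[ℤ_[p]] Vsp p d where
  toFun v := c • v
  map_add' := smul_add c
  map_smul' a v := (smul_comm a c v).symm

lemma scalarMap_one : scalarMap p d 1 = LinearMap.id := by
  ext v
  simp [scalarMap]

lemma scalarMap_comp (c c' : ℚ_[p]) :
    (scalarMap p d c).comp (scalarMap p d c') = scalarMap p d (c * c') := by
  ext v
  simp [scalarMap, mul_smul]

/-- Homothety equivalence of lattices. -/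
def latSetoid : Setoid (LatZ p d) where
  r L L' := ∃ c : ℚ_[p]ˣ, Submodule.map (scalarMap p d (c : ℚ_[p])) L.1 = L'.1
  iseqv := by
    constructor
    · intro L
      exact ⟨1, by rw [Units.val_one, scalarMap_one, Submodule.map_id]⟩
    · rintro L L' ⟨c, hc⟩
      refine ⟨c⁻¹, ?_⟩
      rw [← hc, ← Submodule.map_comp, scalarMap_comp,
        show ((c⁻¹ : ℚ_[p]ˣ) : ℚ_[p]) * (c : ℚ_[p]) = 1 by
          rw [← Units.val_mul, inv_mul_cancel, Units.val_one],
        scalarMap_one, Submodule.map_id]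
    · rintro L L' L'' ⟨c, hc⟩ ⟨c', hc'⟩
      refine ⟨c' * c, ?_⟩
      rw [← hc', ← hc, ← Submodule.map_comp, scalarMap_comp, ← Units.val_mul]

/-- The set of vertices of the Bruhat–Tits building: homothety classes of lattices. -/
def Vtx := Quotient (latSetoid p d)

/-- The action of `g ∈ GL_{d+1}(ℚ_p)` on `ℚ_p^{d+1}`, as a `ℤ_p`-linear map. -/
def glMap (g : GL' p d) : Vsp p d →ₗ[ℤ_[p]] Vsp p d where
  toFun v := (g : Matrix (Fin (d + 1)) (Fin (d + 1)) ℚ_[p]).mulVec v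
  map_add' v w := Matrix.mulVec_add _ v w
  map_smul' a v := by
    have h1 : a • v = (a : ℚ_[p]) • v := (algebraMap_smul ℚ_[p] a v).symm
    have h2 : a • (g : Matrix (Fin (d + 1)) (Fin (d + 1)) ℚ_[p]).mulVec v
        = (a : ℚ_[p]) • (g : Matrix (Fin (d + 1)) (Fin (d + 1)) ℚ_[p]).mulVec v :=
      (algebraMap_smul ℚ_[p] a _).symm
    simp only [RingHom.id_apply, h1, h2, Matrix.mulVec_smul]

lemma glMap_surjective (g : GL' p d) : Function.Surjective (glMap p d g) := by
  intro w
  refine ⟨(g⁻¹ : GL' p d).val.mulVec w, ?_⟩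
  show (g : Matrix (Fin (d + 1)) (Fin (d + 1)) ℚ_[p]).mulVec
      ((g⁻¹ : GL' p d).val.mulVec w) = w
  rw [Matrix.mulVec_mulVec, Units.mul_inv, Matrix.one_mulVec]

lemma IsLattice.map {L : Submodule ℤ_[p] (Vsp p d)} (hL : IsLattice p d L) (g : GL' p d) :
    IsLattice p d (Submodule.map (glMap p d g) L) := by
  constructor
  · exact hL.1.map _
  · have h1 : (Submodule.map (glMap p d g) L : Set (Vsp p d)) = glMap p d g '' L :=
      Submodule.map_coe _ _
    have h2 : ⇑(glMap p d g) = ⇑(Matrix.mulVecLin (g : Matrix _ _ _)) := rfl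
    rw [h1, h2, Submodule.span_image, hL.2, Submodule.map_top, LinearMap.range_eq_top]
    exact glMap_surjective p d g

lemma glMap_scalar_comm (g : GL' p d) (c : ℚ_[p]) :
    (glMap p d g).comp (scalarMap p d c) = (scalarMap p d c).comp (glMap p d g) := by
  refine LinearMap.ext fun v => ?_
  show (g : Matrix (Fin (d + 1)) (Fin (d + 1)) ℚ_[p]).mulVec (c • v)
      = c • (g : Matrix (Fin (d + 1)) (Fin (d + 1)) ℚ_[p]).mulVec v
  rw [Matrix.mulVec_smul]

/-- The action of `GL_{d+1}(ℚ_p)` on lattices. -/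
def latAct (g : GL' p d) (L : LatZ p d) : LatZ p d :=
  ⟨Submodule.map (glMap p d g) L.1, IsLattice.map p d L.2 g⟩

/-- The action of `GL_{d+1}(ℚ_p)` on the vertices of the Bruhat–Tits building. -/
def vAct (g : GL' p d) : Vtx p d → Vtx p d :=
  Quotient.map (latAct p d g) (by
    rintro L L' ⟨c, hc⟩
    refine ⟨c, ?_⟩
    show Submodule.map (scalarMap p d (c : ℚ_[p])) (Submodule.map (glMap p d g) L.1)
        = Submodule.map (glMap p d g) L'.1
    rw [← Submodule.map_comp, ← glMap_scalar_comm, Submodule.map_comp, hc])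

/-- The standard lattice `ℤ_p^{d+1} ⊆ ℚ_p^{d+1}`. -/
def L0 : Submodule ℤ_[p] (Vsp p d) :=
  Submodule.span ℤ_[p] (Set.range fun i : Fin (d + 1) => Pi.single i (1 : ℚ_[p]))

lemma isLattice_L0 : IsLattice p d (L0 p d) := by
  constructor
  · exact Submodule.fg_span (Set.finite_range _)
  · have hb : Submodule.span ℚ_[p]
        (Set.range fun i : Fin (d + 1) => Pi.single i (1 : ℚ_[p])) = ⊤ := by
      have hsp := Module.Basis.span_eq (Pi.basisFun ℚ_[p] (Fin (d + 1)))
      have hr : ⇑(Pi.basisFun ℚ_[p] (Fin (d + 1)))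
          = fun i : Fin (d + 1) => Pi.single i (1 : ℚ_[p]) := by
        funext i
        exact Pi.basisFun_apply ℚ_[p] (Fin (d + 1)) i
      rwa [hr] at hsp
    refine le_antisymm le_top ?_
    rw [← hb]
    exact Submodule.span_mono (fun x hx => Submodule.subset_span hx)

/-- The origin `x_0 = [ℤ_p^{d+1}]` of the Bruhat–Tits building. -/
def x0 : Vtx p d := Quotient.mk _ ⟨L0 p d, isLattice_L0 p d⟩

/-- The diagonal element `φ_k = diag(1, …, 1, p, …, p)` with `k` entries equal to `1`. -/
def phiDiag (k : ℕ) : GL' p d where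
  val := Matrix.diagonal fun j : Fin (d + 1) => if (j : ℕ) < k then 1 else (p : ℚ_[p])
  inv := Matrix.diagonal fun j : Fin (d + 1) => if (j : ℕ) < k then 1 else (p : ℚ_[p])⁻¹
  val_inv := by
    have hp : (p : ℚ_[p]) ≠ 0 :=
      Nat.cast_ne_zero.mpr (Fact.out (p := Nat.Prime p)).ne_zero
    rw [Matrix.diagonal_mul_diagonal]
    have h1 : (fun j : Fin (d + 1) =>
        (if (j : ℕ) < k then 1 else (p : ℚ_[p])) * (if (j : ℕ) < k then 1 else (p : ℚ_[p])⁻¹))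
        = fun _ => 1 := by
      funext j
      by_cases h : (j : ℕ) < k <;> simp [h, mul_inv_cancel₀ hp]
    rw [h1, Matrix.diagonal_one]
  inv_val := by
    have hp : (p : ℚ_[p]) ≠ 0 :=
      Nat.cast_ne_zero.mpr (Fact.out (p := Nat.Prime p)).ne_zero
    rw [Matrix.diagonal_mul_diagonal]
    have h1 : (fun j : Fin (d + 1) =>
        (if (j : ℕ) < k then 1 else (p : ℚ_[p])⁻¹) * (if (j : ℕ) < k then 1 else (p : ℚ_[p])))
        = fun _ => 1 := by
      funext j
      by_cases h : (j : ℕ) < k <;> simp [h, inv_mul_cancel₀ hp]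
    rw [h1, Matrix.diagonal_one]

/-- The vertex `x_i := φ_i · x_0` for `1 ≤ i ≤ d`. -/
def xVtx (i : Fin d) : Vtx p d := vAct p d (phiDiag p d ((i : ℕ) + 1)) (x0 p d)

/-- The `q`-simplex `η_J = {x_0, x_{j_1}, …, x_{j_q}}` for `J ⊆ {1, …, d}`. -/
def etaJ (J : Finset (Fin d)) : Finset (Vtx p d) :=
  insert (x0 p d) (J.image (xVtx p d))

/-- The Borel subgroup `P` of lower triangular matrices in `GL_{d+1}(ℚ_p)`, as a set. -/
def Pset : Set (GL' p d) :=
  {g | ∀ i j : Fin (d + 1), i < j → (g : Matrix (Fin (d + 1)) (Fin (d + 1)) ℚ_[p]) i j = 0}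

/-- The unipotent radical `N` of `P`: lower unitriangular matrices, as a set. -/
def Nset : Set (GL' p d) :=
  {g | (∀ i : Fin (d + 1), (g : Matrix (Fin (d + 1)) (Fin (d + 1)) ℚ_[p]) i i = 1) ∧
    ∀ i j : Fin (d + 1), i < j → (g : Matrix (Fin (d + 1)) (Fin (d + 1)) ℚ_[p]) i j = 0}

/-- The diagonal torus `T`, as a set. -/
def Tset : Set (GL' p d) :=
  {t | ∀ i j : Fin (d + 1), i ≠ j → (t : Matrix (Fin (d + 1)) (Fin (d + 1)) ℚ_[p]) i j = 0}

/-- The compact group `N_0` of lower unitriangular matrices with entries in `ℤ_p`,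
as a set. -/
def N₀set : Set (GL' p d) :=
  {g | g ∈ Nset p d ∧
    ∀ i j : Fin (d + 1), ‖(g : Matrix (Fin (d + 1)) (Fin (d + 1)) ℚ_[p]) i j‖ ≤ 1}

/-- The group `T_0` of diagonal matrices in `GL_{d+1}(ℤ_p)`, as a set. -/
def T₀set : Set (GL' p d) :=
  {t | t ∈ Tset p d ∧
    ∀ i : Fin (d + 1), ‖(t : Matrix (Fin (d + 1)) (Fin (d + 1)) ℚ_[p]) i i‖ = 1}

/-- The set `P_0 = T_0 · N_0`. -/
def P₀set : Set (GL' p d) := T₀set p d * N₀set p d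

/-- The centre `Z ≅ ℚ_p^×` of `GL_{d+1}(ℚ_p)` (the invertible scalar matrices),
as a set. -/
def Zset : Set (GL' p d) :=
  {z | ∃ c : ℚ_[p]ˣ,
    (z : Matrix (Fin (d + 1)) (Fin (d + 1)) ℚ_[p]) = (c : ℚ_[p]) • (1 : Matrix _ _ _)}

/-- The dominant submonoid `T_+ = {t ∈ T ∣ tN_0t⁻¹ ⊆ N_0}`, as a set. -/
def Tplusset : Set (GL' p d) :=
  {t | t ∈ Tset p d ∧ ∀ n ∈ N₀set p d, t * n * t⁻¹ ∈ N₀set p d}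

/-- The monoid `P_+ = N_0 · T_+`, as a set. -/
def Pplusset : Set (GL' p d) := N₀set p d * Tplusset p d

/-- The unipotent group `N` of lower unitriangular matrices over `ℚ_p`, as a
topological space. -/
def Ntype := {x : Matrix (Fin (d + 1)) (Fin (d + 1)) ℚ_[p] //
  (∀ i, x i i = 1) ∧ ∀ i j : Fin (d + 1), i < j → x i j = 0}

instance : TopologicalSpace (Ntype p d) := instTopologicalSpaceSubtype

variable (kk : Type*) [Field kk]

/-- `V_St := C_c^∞(N, k)`: the space of locally constant compactly supported `k`-valued
functions on `N`, realized as a submodule of the locally constant functions. -/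
def VStSub : Submodule kk (LocallyConstant (Ntype p d) kk) where
  carrier := {f | HasCompactSupport ⇑f}
  zero_mem' := by
    show HasCompactSupport ⇑(0 : LocallyConstant (Ntype p d) kk)
    rw [LocallyConstant.coe_zero, HasCompactSupport]
    simp [tsupport]
  add_mem' := by
    intro f g hf hg
    show HasCompactSupport ⇑(f + g)
    rw [LocallyConstant.coe_add]
    exact hf.add hg
  smul_mem' := by
    intro c f hf
    show HasCompactSupport ⇑(c • f)
    refine IsCompact.of_isClosed_subset hf isClosed_closure (closure_mono ?_)
    rw [LocallyConstant.coe_smul]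
    exact Function.support_const_smul_subset c ⇑f

/-- The subspace `C_c^∞(S) ⊆ V_St` of functions supported in a subset `S ⊆ N`. -/
def suppIn (S : Set (Ntype p d)) : Submodule kk ↥(VStSub p d kk) where
  carrier := {f | ∀ x : Ntype p d, x ∉ S → (f : LocallyConstant (Ntype p d) kk) x = 0}
  zero_mem' := fun x _ => rfl
  add_mem' := by
    intro f g hf hg x hx
    show ((f : LocallyConstant (Ntype p d) kk) + g) x = 0
    rw [LocallyConstant.add_apply, hf x hx, hg x hx, add_zero]
  smul_mem' := by
    intro c f hf x hx
    show (c • (f : LocallyConstant (Ntype p d) kk)) x = 0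
    rw [LocallyConstant.smul_apply, hf x hx, smul_zero]

/-- Lower unitriangular matrices with integral entries (the underlying set of `N_0`). -/
def integralUni (y : Matrix (Fin (d + 1)) (Fin (d + 1)) ℚ_[p]) : Prop :=
  (∀ i, y i i = 1) ∧ (∀ i j : Fin (d + 1), i < j → y i j = 0) ∧ ∀ i j, ‖y i j‖ ≤ 1

/-- The subset `N_0 ⊆ N`. -/
def N₀Nset : Set (Ntype p d) := {x | integralUni p d x.1}

/-- The subset `φ_k N_0 φ_k⁻¹ ⊆ N`. -/
def conjN0 (k : ℕ) : Set (Ntype p d) :=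
  {x | ∃ y, integralUni p d y ∧
    x.1 = (phiDiag p d k).val * y * ((phiDiag p d k)⁻¹ : GL' p d).val}

/-- `p·L` for a submodule `L`. -/
def pSub (L : Submodule ℤ_[p] (Vsp p d)) : Submodule ℤ_[p] (Vsp p d) :=
  Submodule.map (scalarMap p d (p : ℚ_[p])) L

/-- `s` is a `q`-simplex of the Bruhat–Tits building: it consists of `q+1` homothety
classes of lattices admitting representatives `pL_0 ⊊ L_q ⊊ ⋯ ⊊ L_1 ⊊ L_0`. -/
def IsSimpCard (q : ℕ) (s : Finset (Vtx p d)) : Prop :=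
  s.card = q + 1 ∧
  ∃ L : Fin (q + 1) → LatZ p d,
    (∀ i j : Fin (q + 1), i < j → (L j).1 < (L i).1) ∧
    pSub p d (L 0).1 < (L (Fin.last q)).1 ∧
    s = Finset.image (fun i => (Quotient.mk (latSetoid p d) (L i) : Vtx p d)) Finset.univ

/-- The set of `q`-simplices. -/
def BTq (q : ℕ) := {s : Finset (Vtx p d) // IsSimpCard p d q s}

/-- The oriented chain group `C_q = ⊕_{η ∈ BT_q} V_η` of a coefficient system `Vc`. -/
def Cc (Vc : Finset (Vtx p d) → Submodule kk ↥(VStSub p d kk)) (q : ℕ) : Type _ :=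
  ⨁ η : BTq p d q, ↥(Vc η.1)

set_option maxSynthPendingDepth 3 in
instance (Vc : Finset (Vtx p d) → Submodule kk ↥(VStSub p d kk)) (q : ℕ) :
    AddCommGroup (Cc p d kk Vc q) :=
  inferInstanceAs (AddCommGroup (⨁ η : BTq p d q, ↥(Vc η.1)))

instance (Vc : Finset (Vtx p d) → Submodule kk ↥(VStSub p d kk)) (q : ℕ) :
    Module kk (Cc p d kk Vc q) :=
  inferInstanceAs (Module kk (⨁ η : BTq p d q, ↥(Vc η.1)))

/-- The boundary map `∂_{q+1} : C_{q+1} → C_q` of the oriented chain complex, with signs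
given by the incidence numbers `inc`. -/
def bdry (Vc : Finset (Vtx p d) → Submodule kk ↥(VStSub p d kk))
    (hface : ∀ s s' : Finset (Vtx p d), s' ⊆ s → Vc s ≤ Vc s')
    (inc : Finset (Vtx p d) → Finset (Vtx p d) → ℤ) (q : ℕ) :
    Cc p d kk Vc (q + 1) →ₗ[kk] Cc p d kk Vc q :=
  DirectSum.toModule kk _ _ fun η =>
    ∑ s' ∈ (η.1.powerset.filter fun s' => IsSimpCard p d q s').attach,
      inc η.1 s'.1 •
        ((DirectSum.lof kk (BTq p d q) (fun η' => ↥(Vc η'.1))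
            ⟨s'.1, (Finset.mem_filter.mp s'.2).2⟩).comp
          (Submodule.inclusion
            (hface _ _ (Finset.mem_powerset.mp (Finset.mem_filter.mp s'.2).1))))

/-- The augmentation `C_0 → V_St` given by the inclusions `V_x ⊆ V_St`. -/
def aug (Vc : Finset (Vtx p d) → Submodule kk ↥(VStSub p d kk)) :
    Cc p d kk Vc 0 →ₗ[kk] ↥(VStSub p d kk) :=
  DirectSum.toModule kk _ _ fun η => (Vc η.1).subtype

/-! ### Compact induction -/

section Induction

variable {p d : ℕ} [Fact (Nat.Prime p)] {kk : Type*} [Field kk]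
variable (W : Type*) [AddCommGroup W] [Module kk W]
variable (H PP : Set (GL' p d)) (ρW : GL' p d → W →ₗ[kk] W)

/-- The compactly induced representation `ind_H^{PP}(W)`: functions `f` on the group
(vanishing outside `PP`) with `f(gb) = b⁻¹·f(g)` for `b ∈ H`, supported on finitely many
cosets `gH`. -/
def IndSub : Submodule kk (GL' p d → W) where
  carrier := {f | (∀ g : GL' p d, ∀ b ∈ H, f (g * b) = ρW b⁻¹ (f g)) ∧
    (∀ x : GL' p d, x ∉ PP → f x = 0) ∧
    ∃ F : Finset (GL' p d), ↑F ⊆ PP ∧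
      ∀ x : GL' p d, f x ≠ 0 → ∃ g ∈ F, ∃ h ∈ H, x = g * h}
  zero_mem' := by
    refine ⟨fun g b _ => by simp, fun x _ => rfl, ∅, by simp, fun x hx => absurd rfl hx⟩
  add_mem' := by
    rintro f g ⟨hf1, hf2, Ff, hFf, hFf'⟩ ⟨hg1, hg2, Fg, hFg, hFg'⟩
    refine ⟨fun x b hb => by simp [Pi.add_apply, hf1 x b hb, hg1 x b hb],
      fun x hx => by simp [Pi.add_apply, hf2 x hx, hg2 x hx],
      Ff ∪ Fg, by
        rw [Finset.coe_union]
        exact Set.union_subset hFf hFg, fun x hx => ?_⟩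
    by_cases h : f x = 0
    · rcases hFg' x (by simpa [Pi.add_apply, h] using hx) with ⟨a, ha, b, hb, rfl⟩
      exact ⟨a, Finset.mem_union_right _ ha, b, hb, rfl⟩
    · rcases hFf' x h with ⟨a, ha, b, hb, rfl⟩
      exact ⟨a, Finset.mem_union_left _ ha, b, hb, rfl⟩
  smul_mem' := by
    rintro c f ⟨hf1, hf2, Ff, hFf, hFf'⟩
    refine ⟨fun x b hb => by simp [Pi.smul_apply, hf1 x b hb],
      fun x hx => by simp [Pi.smul_apply, hf2 x hx], Ff, hFf, fun x hx => ?_⟩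
    refine hFf' x fun h => hx ?_
    simp [Pi.smul_apply, h]

/-- The "delta function" in the induced representation supported on the coset `g₀H` with
value `w` at `g₀`. -/
def indDelta (g₀ : GL' p d) (w : W) : GL' p d → W :=
  fun x => if g₀⁻¹ * x ∈ H then ρW (x⁻¹ * g₀) w else 0

lemma indDelta_mem (hHP : H ⊆ PP) (hPmul : ∀ a ∈ PP, ∀ b ∈ PP, a * b ∈ PP)
    (hHmul : ∀ a ∈ H, ∀ b ∈ H, a * b ∈ H) (hHinv : ∀ a ∈ H, a⁻¹ ∈ H)
    (hρWmul : ∀ a ∈ H, ∀ b ∈ H, ρW (a * b) = (ρW a).comp (ρW b))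
    (g₀ : GL' p d) (hg₀ : g₀ ∈ PP) (w : W) :
    indDelta W H ρW g₀ w ∈ IndSub W H PP ρW := by
  refine ⟨fun g b hb => ?_, fun x hx => ?_, {g₀}, by simpa using hg₀, fun x hx => ?_⟩
  · by_cases h : g₀⁻¹ * g ∈ H
    · have h2 : g₀⁻¹ * (g * b) ∈ H := by
        rw [← mul_assoc]
        exact hHmul _ h _ hb
      have h3 : g⁻¹ * g₀ ∈ H := by
        have : g⁻¹ * g₀ = (g₀⁻¹ * g)⁻¹ := by group
        rw [this]
        exact hHinv _ h
      rw [indDelta, if_pos h2, indDelta, if_pos h]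
      have h4 : (g * b)⁻¹ * g₀ = b⁻¹ * (g⁻¹ * g₀) := by group
      rw [h4, hρWmul _ (hHinv _ hb) _ h3, LinearMap.comp_apply]
    · have h2 : g₀⁻¹ * (g * b) ∉ H := by
        intro hcon
        apply h
        have : g₀⁻¹ * g = g₀⁻¹ * (g * b) * b⁻¹ := by group
        rw [this]
        exact hHmul _ hcon _ (hHinv _ hb)
      rw [indDelta, if_neg h2, indDelta, if_neg h, map_zero]
  · rw [indDelta]
    split_ifs with h
    · exfalso
      apply hx
      have : x = g₀ * (g₀⁻¹ * x) := by group
      rw [this]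
      exact hPmul _ hg₀ _ (hHP h)
    · rfl
  · rw [indDelta] at hx
    by_cases h : g₀⁻¹ * x ∈ H
    · exact ⟨g₀, Finset.mem_singleton_self _, g₀⁻¹ * x, h, by group⟩
    · exact absurd (if_neg h) hx

end Induction

/-- The `P_0Z`-subrepresentation
`V_q = ⊕_{|J| = q} ⊕_{b₀ ∈ P₀} V_{b₀·η_J}` of `⊕_{η ∈ BT_q} V_η`. -/
def VqSub (p d : ℕ) [Fact (Nat.Prime p)] (kk : Type*) [Field kk]
    (Vc : Finset (Vtx p d) → Submodule kk ↥(VStSub p d kk)) (q : ℕ) :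
    Submodule kk (Cc p d kk Vc q) :=
  ⨆ (η : BTq p d q) (_ : ∃ b ∈ P₀set p d, ∃ J : Finset (Fin d),
      J.card = q ∧ η.1 = Finset.image (vAct p d b) (etaJ p d J)),
    LinearMap.range (DirectSum.lof kk (BTq p d q) (fun η' => ↥(Vc η'.1)) η)

/-! `P_0Z` is the stabilizer of `x_0` in `P`. For `b ∈ P` the ratio `|b_dd| / |b_00|` depends only
on the vertex `b • x_0`; on the vertices of `η_J` it is at most `1`, with equality only at `x_0`.
Hence `g • η_J = η_{J'}` with `g ∈ P` forces `g ∈ P_0Z`, so the translates of `V_q` under distinct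
cosets of `P_0Z` in `P` have disjoint supports. Writing `π` for the projection of `⊕_η V_η` onto the
summands of `V_q`, an element `f` of the induced representation is recovered from its image by
`f(g) = π(g⁻¹ Φ(f))`, and `Φ` is onto because every simplex `η` with `V_η ≠ 0` is a `P`-translate of
some `η_J`. -/

section DirectSum

variable {R : Type*} [CommRing R] {ι : Type*} {V : ι → Type*} [∀ i, AddCommGroup (V i)]
  [∀ i, Module R (V i)]

variable (R V) in
/-- The partial direct sum `⨁ i ∈ S, V i`, as a subspace of `⨁ i, V i`. -/
def partialSum (S : Set ι) : Submodule R (⨁ i, V i) :=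
  ⨆ (i) (_ : i ∈ S), LinearMap.range (DirectSum.lof R ι V i)

lemma partialSum_le_iff {S : Set ι} {M : Submodule R (⨁ i, V i)} :
    partialSum R V S ≤ M ↔ ∀ i ∈ S, ∀ v, DirectSum.lof R ι V i v ∈ M := by
  rw [partialSum, iSup₂_le_iff]
  exact forall₂_congr fun _ _ => Set.range_subset_iff

lemma lof_mem_partialSum {S : Set ι} {i : ι} (hi : i ∈ S) (v : V i) :
    DirectSum.lof R ι V i v ∈ partialSum R V S :=
  partialSum_le_iff.mp le_rfl i hi v

lemma filterLinearMap_apply_of_mem_partialSum {S : Set ι} {w : ⨁ i, V i}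
    (hw : w ∈ partialSum R V S) : DFinsupp.filterLinearMap R V (· ∈ S) w = w := by
  suffices h : partialSum R V S ≤
      LinearMap.eqLocus (DFinsupp.filterLinearMap R V (· ∈ S)) LinearMap.id from h hw
  exact partialSum_le_iff.mpr fun i hi v => DFinsupp.filter_single_pos i v hi

lemma lof_coe_congr {M : Type*} [AddCommGroup M] [Module R M] {V : ι → Submodule R M} {i j : ι}
    (hij : i = j) {v : V i} {w : V j} (hvw : (v : M) = w) :
    DirectSum.lof R ι (fun i => V i) i v = DirectSum.lof R ι (fun i => V i) j w := by
  subst hij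
  rw [Subtype.ext hvw]

variable {G : Type*} [Group G]

/-- The representation of a subgroup `K` on `M` given by a map on the ambient group which is
multiplicative on `K`. -/
def subgroupRep {M : Type*} [AddCommGroup M] [Module R M] (K : Subgroup G)
    (ρ : G → M →ₗ[R] M) (h_one : ρ 1 = 1)
    (h_mul : ∀ a ∈ K, ∀ b ∈ K, ρ (a * b) = (ρ a).comp (ρ b)) : Representation R K M where
  toFun b := ρ b
  map_one' := h_one
  map_mul' a b := h_mul a a.2 b b.2

variable [MulAction G ι] {σ : Representation R G (⨁ i, V i)}

lemma filterLinearMap_apply_eq_zero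
    (hσ : ∀ g i v, σ g (DirectSum.lof R ι V i v) ∈
      LinearMap.range (DirectSum.lof R ι V (g • i)))
    {S : Set ι} {g : G} (hg : ∀ i ∈ S, g • i ∉ S) {w : ⨁ i, V i}
    (hw : w ∈ partialSum R V S) :
    DFinsupp.filterLinearMap R V (· ∈ S) (σ g w) = 0 := by
  suffices h : partialSum R V S ≤
      LinearMap.ker (DFinsupp.filterLinearMap R V (· ∈ S) ∘ₗ σ g) from h hw
  refine partialSum_le_iff.mpr fun i hi v => ?_
  obtain ⟨v', hv'⟩ := hσ g i v
  rw [LinearMap.mem_ker, LinearMap.comp_apply, ← hv']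
  exact DFinsupp.filter_single_neg _ v' (hg i hi)

lemma iSup_map_partialSum_eq_top
    (hσ : ∀ g i v, σ g (DirectSum.lof R ι V i v) ∈
      LinearMap.range (DirectSum.lof R ι V (g • i)))
    {S : Set ι} (hS : ∀ i, Nontrivial (V i) → ∃ g : G, g • i ∈ S) :
    ⨆ g : G, (partialSum R V S).map (σ g) = ⊤ := by
  have hlof (i) (v : V i) :
      DirectSum.lof R ι V i v ∈ ⨆ g : G, (partialSum R V S).map (σ g) := by
    rcases subsingleton_or_nontrivial (V i) with hV | hV
    · rw [Subsingleton.elim v 0, map_zero]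
      exact zero_mem _
    obtain ⟨g, hgi⟩ := hS i hV
    obtain ⟨v', hv'⟩ := hσ g i v
    refine Submodule.mem_iSup_of_mem g⁻¹ ⟨_, lof_mem_partialSum hgi v', ?_⟩
    rw [hv', Representation.inv_self_apply]
  refine Submodule.eq_top_iff'.mpr fun c => ?_
  induction c using DirectSum.induction_on with
  | zero => exact zero_mem _
  | of i v => exact hlof i v
  | add x y hx hy => exact add_mem hx hy

end DirectSum

section CompactInduction

variable {p d} {kk} {H K : Subgroup (GL' p d)}

section

variable {W : Type*} [AddCommGroup W] [Module kk W] {ρW : GL' p d → W →ₗ[kk] W}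

lemma indDelta_apply_self_of_mem {f : GL' p d → W} (hf : f ∈ IndSub W H K ρW) {g x : GL' p d}
    (hgx : g⁻¹ * x ∈ H) : indDelta W H ρW g (f g) x = f x := by
  conv_rhs => rw [← mul_inv_cancel_left g x, hf.1 g _ hgx, mul_inv_rev, inv_inv]
  exact if_pos hgx

lemma eq_of_eq_on_indDelta {M : Type*} [AddCommGroup M] [Module kk M]
    (hδ : ∀ g ∈ K, ∀ w, indDelta W H ρW g w ∈ IndSub W H K ρW)
    {φ ψ : IndSub W H K ρW →ₗ[kk] M}
    (h : ∀ g (hg : g ∈ K) w, φ ⟨_, hδ g hg w⟩ = ψ ⟨_, hδ g hg w⟩) : φ = ψ := by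
  suffices hF : ∀ F : Finset (GL' p d), (F : Set (GL' p d)) ⊆ K → ∀ f : IndSub W H K ρW,
      (∀ x, f.1 x ≠ 0 → ∃ g ∈ F, g⁻¹ * x ∈ H) → φ f = ψ f by
    refine LinearMap.ext fun f => ?_
    obtain ⟨F, hFK, hF_supp⟩ := f.2.2.2
    refine hF F hFK f fun x hx => ?_
    obtain ⟨g, hg, h, hh, rfl⟩ := hF_supp x hx
    exact ⟨g, hg, by rwa [inv_mul_cancel_left]⟩
  intro F
  induction F using Finset.induction_on with
  | empty =>
    intro _ f hf
    have hf0 : f = 0 := Subtype.ext <| funext fun x => by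
      by_contra hx
      obtain ⟨g, hg, -⟩ := hf x hx
      exact Finset.notMem_empty g hg
    rw [hf0, map_zero, map_zero]
  | insert g F _ ih =>
    intro hFK f hf
    have hgK : g ∈ K := hFK (Finset.mem_insert_self g F)
    let δ : IndSub W H K ρW := ⟨_, hδ g hgK (f.1 g)⟩
    have hsub : φ (f - δ) = ψ (f - δ) := by
      refine ih (fun x hx => hFK (Finset.mem_insert_of_mem hx)) _ fun x hx => ?_
      change f.1 x - indDelta W H ρW g (f.1 g) x ≠ 0 at hx
      have hgx : g⁻¹ * x ∉ H := fun hgx =>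
        hx (sub_eq_zero.mpr (indDelta_apply_self_of_mem f.2 hgx).symm)
      have hfx : f.1 x ≠ 0 := by
        have hδx : indDelta W H ρW g (f.1 g) x = 0 := if_neg hgx
        rwa [hδx, sub_zero] at hx
      obtain ⟨g', hg', hg'x⟩ := hf x hfx
      rcases Finset.mem_insert.mp hg' with rfl | hg'F
      · exact absurd hg'x hgx
      · exact ⟨g', hg'F, hg'x⟩
    rwa [map_sub, map_sub, h g hgK, sub_left_inj] at hsub

end

variable {C : Type*} [AddCommGroup C] [Module kk C] {W : Submodule kk C}
  {σ : Representation kk K C} {ρW : GL' p d → W →ₗ[kk] W}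
  {hδ : ∀ g ∈ K, ∀ w, indDelta W H ρW g w ∈ IndSub W H K ρW}
  {Φ : IndSub W H K ρW →ₗ[kk] C}

lemma indDelta_mem_indSub (hHK : H ≤ K)
    (hρW : ∀ b (hb : b ∈ H) (w : W), (ρW b w : C) = σ ⟨b, hHK hb⟩ w) :
    ∀ g ∈ K, ∀ w, indDelta W H ρW g w ∈ IndSub W H K ρW := by
  refine indDelta_mem W H K ρW hHK (fun _ ha _ hb => mul_mem ha hb)
    (fun _ ha _ hb => mul_mem ha hb) (fun _ ha => inv_mem ha) fun a ha b hb =>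
      LinearMap.ext fun w => Subtype.ext ?_
  rw [LinearMap.comp_apply, hρW _ (mul_mem ha hb), hρW a ha, hρW b hb, ← Module.End.mul_apply,
    ← map_mul]
  rfl

lemma coe_apply_eq_of_indDelta (hHK : H ≤ K)
    (hρW : ∀ b (hb : b ∈ H) (w : W), (ρW b w : C) = σ ⟨b, hHK hb⟩ w)
    (hΦ : ∀ (g : K) (w : W), Φ ⟨_, hδ g g.2 w⟩ = σ g w)
    {π : C →ₗ[kk] C} (hπ_W : ∀ w ∈ W, π w = w)
    (hπ_σ : ∀ g : K, (g : GL' p d) ∉ H → ∀ w ∈ W, π (σ g w) = 0)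
    (f : IndSub W H K ρW) (x : K) : (f.1 x : C) = π (σ x⁻¹ (Φ f)) := by
  let ev : IndSub W H K ρW →ₗ[kk] C :=
    W.subtype ∘ₗ LinearMap.proj (x : GL' p d) ∘ₗ (IndSub W H K ρW).subtype
  have hev : ev = π ∘ₗ σ x⁻¹ ∘ₗ Φ := by
    refine eq_of_eq_on_indDelta hδ fun g hg w => ?_
    have hinv : (g⁻¹ * (x : GL' p d))⁻¹ = (x : GL' p d)⁻¹ * g := by rw [mul_inv_rev, inv_inv]
    have hσx : σ x⁻¹ (σ ⟨g, hg⟩ w) = σ (x⁻¹ * ⟨g, hg⟩) w := by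
      rw [map_mul, Module.End.mul_apply]
    change (indDelta W H ρW g w x : C) = π (σ x⁻¹ (Φ _))
    rw [hΦ ⟨g, hg⟩, hσx]
    by_cases hgx : g⁻¹ * (x : GL' p d) ∈ H
    · have hmem : (x : GL' p d)⁻¹ * g ∈ H := hinv ▸ inv_mem hgx
      have hδx : indDelta W H ρW g w x = ρW ((x : GL' p d)⁻¹ * g) w := if_pos hgx
      have hσ : (ρW ((x : GL' p d)⁻¹ * g) w : C) = σ (x⁻¹ * ⟨g, hg⟩) w := hρW _ hmem w
      rw [hδx, ← hπ_W _ (SetLike.coe_mem _), hσ]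
    · have hδx : indDelta W H ρW g w x = 0 := if_neg hgx
      rw [hδx, hπ_σ _ (fun hmem => hgx (inv_mem_iff.mp (hinv ▸ hmem))) w w.2, Submodule.coe_zero]
  exact LinearMap.congr_fun hev f

lemma surjective_of_indDelta (hΦ : ∀ (g : K) (w : W), Φ ⟨_, hδ g g.2 w⟩ = σ g w)
    (hW : ⨆ g : K, W.map (σ g) = ⊤) : Function.Surjective Φ := by
  rw [← LinearMap.range_eq_top, eq_top_iff, ← hW, iSup_le_iff]
  rintro g _ ⟨w, hw, rfl⟩
  exact ⟨_, hΦ g ⟨w, hw⟩⟩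

theorem bijective_of_indDelta (hHK : H ≤ K)
    (hρW : ∀ b (hb : b ∈ H) (w : W), (ρW b w : C) = σ ⟨b, hHK hb⟩ w)
    (hΦ : ∀ (g : K) (w : W), Φ ⟨_, hδ g g.2 w⟩ = σ g w)
    {π : C →ₗ[kk] C} (hπ_W : ∀ w ∈ W, π w = w)
    (hπ_σ : ∀ g : K, (g : GL' p d) ∉ H → ∀ w ∈ W, π (σ g w) = 0)
    (hW : ⨆ g : K, W.map (σ g) = ⊤) : Function.Bijective Φ := by
  refine ⟨(injective_iff_map_eq_zero Φ).mpr fun f hf => Subtype.ext (funext fun x => ?_),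
    surjective_of_indDelta hΦ hW⟩
  by_cases hx : x ∈ K
  · apply Subtype.ext
    rw [coe_apply_eq_of_indDelta hHK hρW hΦ hπ_W hπ_σ f ⟨x, hx⟩, hf, map_zero, map_zero]
    rfl
  · exact f.2.2.1 x hx

end CompactInduction

section Building

variable {p d} {q : ℕ}

lemma glMap_mul (g h : GL' p d) : glMap p d (g * h) = (glMap p d g).comp (glMap p d h) :=
  LinearMap.ext fun v => (Matrix.mulVec_mulVec v g.val h.val).symm

lemma glMap_one : glMap p d 1 = LinearMap.id :=
  LinearMap.ext Matrix.one_mulVec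

lemma glMap_injective (g : GL' p d) : Function.Injective (glMap p d g) :=
  Matrix.mulVec_injective_of_isUnit g.isUnit

lemma glMap_units_smul (c : ℚ_[p]ˣ) (g : GL' p d) :
    glMap p d (c • g) = (scalarMap p d c).comp (glMap p d g) :=
  LinearMap.ext fun v => Matrix.smul_mulVec (c : ℚ_[p]) g.val v

instance : MulAction (GL' p d) (LatZ p d) where
  smul := latAct p d
  one_smul L := Subtype.ext <| by
    change Submodule.map (glMap p d 1) L.1 = L.1
    rw [glMap_one, Submodule.map_id]
  mul_smul g h L := Subtype.ext <| by
    change Submodule.map (glMap p d (g * h)) L.1 =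
      Submodule.map (glMap p d g) (Submodule.map (glMap p d h) L.1)
    rw [glMap_mul, Submodule.map_comp]

instance : MulAction (GL' p d) (Vtx p d) where
  smul := vAct p d
  one_smul := Quotient.ind fun L => congrArg (Quotient.mk _) (one_smul (GL' p d) L)
  mul_smul g h := Quotient.ind fun L => congrArg (Quotient.mk _) (mul_smul g h L)

lemma IsSimpCard.smul {s : Finset (Vtx p d)} (hs : IsSimpCard p d q s) (g : GL' p d) :
    IsSimpCard p d q (g • s) := by
  obtain ⟨hcard, L, hanti, hp, hL⟩ := hs
  have hmono : StrictMono (Submodule.map (glMap p d g)) :=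
    Submodule.map_strictMono_of_injective (glMap_injective g)
  have hrange : (s : Set (Vtx p d)) = Set.range fun i => Quotient.mk (latSetoid p d) (L i) := by
    rw [hL]
    exact Fintype.coe_image_univ (β := Quotient (latSetoid p d))
  refine ⟨by rw [Finset.card_smul_finset, hcard], fun i => g • L i,
    fun i j hij => hmono (hanti i j hij), ?_, ?_⟩
  · have hpg : pSub p d (g • L 0).1 = Submodule.map (glMap p d g) (pSub p d (L 0).1) := by
      change Submodule.map _ (Submodule.map _ _) = Submodule.map _ (Submodule.map _ _)
      rw [← Submodule.map_comp, ← glMap_scalar_comm, Submodule.map_comp]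
    rw [hpg]
    exact hmono hp
  · apply Finset.coe_injective
    rw [Finset.coe_smul_finset, hrange]
    refine (Set.range_comp (vAct p d g) _).symm.trans (Eq.symm ?_)
    exact Fintype.coe_image_univ (β := Quotient (latSetoid p d))

instance : MulAction (GL' p d) (BTq p d q) where
  smul g η := ⟨g • η.1, η.2.smul g⟩
  one_smul η := Subtype.ext (one_smul (GL' p d) η.1)
  mul_smul g h η := Subtype.ext (mul_smul g h η.1)

end Building

section Stabilizer

variable {p d}

lemma mem_L0_iff {v : Vsp p d} : v ∈ L0 p d ↔ ∀ i, ‖v i‖ ≤ 1 := by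
  refine ⟨fun hv => ?_, fun hv => ?_⟩
  · induction hv using Submodule.span_induction with
    | mem x hx =>
      obtain ⟨j, rfl⟩ := hx
      intro i
      by_cases h : i = j <;> simp [h]
    | zero => simp
    | add x y _ _ hx hy => exact fun i => (Padic.nonarchimedean _ _).trans (max_le (hx i) (hy i))
    | smul a x _ hx =>
      intro i
      change ‖(a : ℚ_[p]) * x i‖ ≤ 1
      rw [norm_mul]
      exact mul_le_one₀ a.norm_le_one (norm_nonneg _) (hx i)
  · have hsum : v = ∑ i, v i • (Pi.single i 1 : Vsp p d) := pi_eq_sum_univ' v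
    rw [hsum]
    exact Submodule.sum_mem _ fun i _ =>
      (L0 p d).smul_mem (⟨v i, hv i⟩ : ℤ_[p]) (Submodule.subset_span (Set.mem_range_self i))

lemma map_glMap_L0_le_iff {g : GL' p d} :
    Submodule.map (glMap p d g) (L0 p d) ≤ L0 p d ↔ ∀ i j, ‖g.val i j‖ ≤ 1 := by
  rw [L0, Submodule.map_span_le, Set.forall_mem_range]
  change (∀ j, g.val.mulVec (Pi.single j 1) ∈ L0 p d) ↔ _
  simp only [Matrix.mulVec_single_one, mem_L0_iff, Matrix.col_apply]
  exact forall_comm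

lemma map_glMap_L0_eq_iff {g : GL' p d} :
    Submodule.map (glMap p d g) (L0 p d) = L0 p d ↔
      (∀ i j, ‖g.val i j‖ ≤ 1) ∧ ∀ i j, ‖g⁻¹.val i j‖ ≤ 1 := by
  have hinv : L0 p d ≤ Submodule.map (glMap p d g) (L0 p d) ↔
      Submodule.map (glMap p d g⁻¹) (L0 p d) ≤ L0 p d := by
    rw [← Submodule.map_le_map_iff_of_injective (glMap_injective g) (Submodule.map _ _),
      ← Submodule.map_comp, ← glMap_mul, mul_inv_cancel, glMap_one, Submodule.map_id]
  rw [le_antisymm_iff, hinv, map_glMap_L0_le_iff, map_glMap_L0_le_iff]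

lemma smul_x0_eq_iff {g : GL' p d} :
    g • x0 p d = x0 p d ↔
      ∃ c : ℚ_[p]ˣ, Submodule.map (glMap p d (c • g)) (L0 p d) = L0 p d := by
  simp only [glMap_units_smul, Submodule.map_comp]
  exact Quotient.eq

lemma norm_inv_apply_le_one {g : GL' p d} (hg : ∀ i j, ‖g.val i j‖ ≤ 1)
    (hdet : ‖g.val.det‖ = 1) (i j : Fin (d + 1)) : ‖g⁻¹.val i j‖ ≤ 1 := by
  let M : Matrix (Fin (d + 1)) (Fin (d + 1)) ℤ_[p] := Matrix.of fun i j => ⟨g.val i j, hg i j⟩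
  have hM : PadicInt.Coe.ringHom.mapMatrix M = g.val := rfl
  have hunit : IsUnit M.det := by
    rw [PadicInt.isUnit_iff, ← hdet, ← hM, ← RingHom.map_det]
    rfl
  have hinv : g⁻¹.val = PadicInt.Coe.ringHom.mapMatrix M⁻¹ := by
    refine Units.inv_eq_of_mul_eq_one_right ?_
    rw [← hM, ← map_mul, Matrix.mul_nonsing_inv _ hunit, map_one]
  rw [hinv]
  exact (M⁻¹ i j).norm_le_one

variable (p d) in
/-- The Borel subgroup `P` of lower triangular matrices. -/
def borelSubgroup : Subgroup (GL' p d) where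
  carrier := Pset p d
  one_mem' := Matrix.blockTriangular_one (b := OrderDual.toDual)
  mul_mem' {g h} hg hh := Matrix.BlockTriangular.mul (b := OrderDual.toDual) hg hh
  inv_mem' {g} hg := by
    have := g.invertible
    have hg := Matrix.blockTriangular_inv_of_blockTriangular (b := OrderDual.toDual) hg
    rwa [← Matrix.coe_units_inv] at hg

lemma mul_apply_self_of_mem_borelSubgroup {g h : GL' p d} (hg : g ∈ borelSubgroup p d)
    (hh : h ∈ borelSubgroup p d) (i : Fin (d + 1)) :
    (g * h).val i i = g.val i i * h.val i i := by
  rw [Units.val_mul, Matrix.mul_apply]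
  refine Finset.sum_eq_single_of_mem _ (Finset.mem_univ _) fun j _ hj => ?_
  rcases hj.lt_or_gt with hji | hij
  · rw [hh j i hji, mul_zero]
  · rw [hg i j hij, zero_mul]

lemma apply_self_mul_inv_apply_self {g : GL' p d} (hg : g ∈ borelSubgroup p d) (i : Fin (d + 1)) :
    g.val i i * g⁻¹.val i i = 1 := by
  rw [← mul_apply_self_of_mem_borelSubgroup hg (inv_mem hg), mul_inv_cancel,
    Units.val_one, Matrix.one_apply_eq]

lemma apply_self_ne_zero {g : GL' p d} (hg : g ∈ borelSubgroup p d) (i : Fin (d + 1)) :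
    g.val i i ≠ 0 :=
  left_ne_zero_of_mul_eq_one (apply_self_mul_inv_apply_self hg i)

lemma units_smul_mem_borelSubgroup {g : GL' p d} (hg : g ∈ borelSubgroup p d) (c : ℚ_[p]ˣ) :
    c • g ∈ borelSubgroup p d := fun i j hij => by
  rw [Units.val_smul, Matrix.smul_apply, hg i j hij, smul_zero]

lemma mem_P₀set_iff {g : GL' p d} :
    g ∈ P₀set p d ↔ g ∈ borelSubgroup p d ∧ (∀ i j, ‖g.val i j‖ ≤ 1) ∧ ∀ i, ‖g.val i i‖ = 1 := by
  constructor
  · rintro ⟨t, ⟨htT, htnorm⟩, n, ⟨⟨hn_diag, hn_tri⟩, hn_int⟩, rfl⟩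
    have htn (i j) : (t * n).val i j = t.val i i * n.val i j := by
      rw [Units.val_mul, Matrix.mul_apply]
      exact Finset.sum_eq_single_of_mem _ (Finset.mem_univ _) fun k _ hk => by
        rw [htT i k hk.symm, zero_mul]
    refine ⟨fun i j hij => ?_, fun i j => ?_, fun i => ?_⟩
    · rw [htn, hn_tri i j hij, mul_zero]
    · rw [htn, norm_mul, htnorm, one_mul]
      exact hn_int i j
    · rw [htn, hn_diag, mul_one, htnorm]
  · rintro ⟨hgP, hg_int, hg_diag⟩
    let t : GL' p d := Units.map (Matrix.diagonalRingHom (Fin (d + 1)) ℚ_[p]).toMonoidHom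
      (MulEquiv.piUnits.symm fun i => Units.mk0 (g.val i i) (apply_self_ne_zero hgP i))
    have ht : t.val = Matrix.diagonal fun i => g.val i i := rfl
    have ht_inv : t⁻¹.val = Matrix.diagonal fun i => (g.val i i)⁻¹ := rfl
    have hn (i j) : (t⁻¹ * g).val i j = (g.val i i)⁻¹ * g.val i j := by
      rw [Units.val_mul, ht_inv, Matrix.diagonal_mul]
    refine ⟨t, ⟨fun i j hij => ?_, fun i => ?_⟩, t⁻¹ * g,
      ⟨⟨fun i => ?_, fun i j hij => ?_⟩, fun i j => ?_⟩, mul_inv_cancel_left t g⟩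
    · rw [ht, Matrix.diagonal_apply_ne _ hij]
    · rw [ht, Matrix.diagonal_apply_eq, hg_diag]
    · rw [hn, inv_mul_cancel₀ (apply_self_ne_zero hgP i)]
    · rw [hn, hgP i j hij, mul_zero]
    · rw [hn, norm_mul, norm_inv, hg_diag, inv_one, one_mul]
      exact hg_int i j

lemma norm_det_eq_prod_of_mem_borelSubgroup {g : GL' p d} (hg : g ∈ borelSubgroup p d) :
    ‖g.val.det‖ = ∏ i, ‖g.val i i‖ := by
  rw [Matrix.det_of_isLowerTriangular _ hg, norm_prod]

lemma mem_P₀set_iff_map_L0_eq {g : GL' p d} :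
    g ∈ P₀set p d ↔ g ∈ borelSubgroup p d ∧ Submodule.map (glMap p d g) (L0 p d) = L0 p d := by
  rw [mem_P₀set_iff, map_glMap_L0_eq_iff]
  refine and_congr_right fun hg => and_congr_right fun hg_int => ⟨fun hdiag => ?_, fun hinv i => ?_⟩
  · refine norm_inv_apply_le_one hg_int ?_
    rw [norm_det_eq_prod_of_mem_borelSubgroup hg, Finset.prod_eq_one fun i _ => hdiag i]
  · have hmul : ‖g.val i i‖ * ‖g⁻¹.val i i‖ = 1 := by
      rw [← norm_mul, apply_self_mul_inv_apply_self hg, norm_one]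
    refine (hg_int i i).antisymm ?_
    rw [← hmul]
    exact mul_le_of_le_one_right (norm_nonneg _) (hinv i i)

lemma mul_units_smul_one (g : GL' p d) (c : ℚ_[p]ˣ) : g * c • 1 = c • g :=
  Units.ext <| by simp only [Units.val_mul, Units.val_smul, Units.val_one, mul_smul_comm, mul_one]

lemma mem_Zset_iff {z : GL' p d} : z ∈ Zset p d ↔ ∃ c : ℚ_[p]ˣ, z = c • 1 :=
  exists_congr fun c => (Units.ext_iff (u := z) (v := c • 1)).symm

lemma mem_P₀set_mul_Zset_iff {g : GL' p d} :
    g ∈ P₀set p d * Zset p d ↔ g ∈ borelSubgroup p d ∧ g • x0 p d = x0 p d := by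
  rw [smul_x0_eq_iff, Set.mem_mul]
  constructor
  · rintro ⟨b, hb, z, hz, rfl⟩
    obtain ⟨c, rfl⟩ := mem_Zset_iff.mp hz
    obtain ⟨hbP, hbL⟩ := mem_P₀set_iff_map_L0_eq.mp hb
    rw [mul_units_smul_one]
    exact ⟨units_smul_mem_borelSubgroup hbP c, c⁻¹, by rwa [inv_smul_smul]⟩
  · rintro ⟨hg, c, hc⟩
    exact ⟨c • g, mem_P₀set_iff_map_L0_eq.mpr ⟨units_smul_mem_borelSubgroup hg c, hc⟩, c⁻¹ • 1,
      mem_Zset_iff.mpr ⟨c⁻¹, rfl⟩, by rw [mul_units_smul_one, inv_smul_smul]⟩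

variable (p d) in
/-- The subgroup `P_0Z`, i.e. the stabilizer of `x_0` in `P`. -/
def P₀ZSubgroup : Subgroup (GL' p d) :=
  (borelSubgroup p d ⊓ MulAction.stabilizer (GL' p d) (x0 p d)).copy (P₀set p d * Zset p d) <|
    Set.ext fun _ => mem_P₀set_mul_Zset_iff

lemma mem_P₀ZSubgroup_iff {g : GL' p d} :
    g ∈ P₀ZSubgroup p d ↔ g ∈ borelSubgroup p d ∧ g • x0 p d = x0 p d :=
  mem_P₀set_mul_Zset_iff

lemma P₀ZSubgroup_le_borelSubgroup : P₀ZSubgroup p d ≤ borelSubgroup p d :=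
  fun _ hg => (mem_P₀ZSubgroup_iff.mp hg).1

end Stabilizer

section StandardSimplices

variable {p d} {q : ℕ}

/-- The invariant `|g_{ii}| / |g_{00}|` of `g ∈ P`, which depends only on the vertex `g • x_0`
and so separates the vertices of the simplices `η_J`. -/
def diagRatio (g : GL' p d) (i : Fin (d + 1)) : ℝ := ‖g.val i i‖ / ‖g.val 0 0‖

lemma diagRatio_one (i : Fin (d + 1)) : diagRatio (1 : GL' p d) i = 1 := by
  simp [diagRatio]

lemma diagRatio_mul {g h : GL' p d} (hg : g ∈ borelSubgroup p d) (hh : h ∈ borelSubgroup p d)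
    (i : Fin (d + 1)) : diagRatio (g * h) i = diagRatio g i * diagRatio h i := by
  simp only [diagRatio, mul_apply_self_of_mem_borelSubgroup hg hh, norm_mul, mul_div_mul_comm]

lemma diagRatio_eq_one_of_mem_P₀ZSubgroup {g : GL' p d} (hg : g ∈ P₀ZSubgroup p d)
    (i : Fin (d + 1)) : diagRatio g i = 1 := by
  obtain ⟨b, hb, z, hz, rfl⟩ := hg
  obtain ⟨c, rfl⟩ := mem_Zset_iff.mp hz
  have hb_diag := (mem_P₀set_iff.mp hb).2.2
  change diagRatio (b * c • 1) i = 1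
  simp only [mul_units_smul_one, diagRatio, Units.val_smul, Matrix.smul_apply, Units.smul_def,
    smul_eq_mul, norm_mul, hb_diag, mul_one]
  exact div_self (norm_ne_zero_iff.mpr c.ne_zero)

lemma diagRatio_eq_of_smul_x0_eq {g h : GL' p d} (hg : g ∈ borelSubgroup p d)
    (hh : h ∈ borelSubgroup p d)
    (hgh : g • x0 p d = h • x0 p d) (i : Fin (d + 1)) : diagRatio g i = diagRatio h i := by
  have hmem : g⁻¹ * h ∈ P₀ZSubgroup p d := mem_P₀ZSubgroup_iff.mpr
    ⟨mul_mem (inv_mem hg) hh, by rw [mul_smul, ← hgh, inv_smul_smul]⟩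
  rw [← mul_inv_cancel_left g h, diagRatio_mul hg (P₀ZSubgroup_le_borelSubgroup hmem),
    diagRatio_eq_one_of_mem_P₀ZSubgroup hmem, mul_one]

lemma phiDiag_mem_borelSubgroup (k : ℕ) : phiDiag p d k ∈ borelSubgroup p d :=
  fun _ _ hij => Matrix.diagonal_apply_ne _ hij.ne

lemma phiDiag_eq_one {k : ℕ} (hk : d < k) : phiDiag p d k = 1 := by
  refine Units.ext (Matrix.diagonal_eq_one.mpr (funext fun i => if_pos ?_))
  omega

lemma diagRatio_phiDiag {k : ℕ} (hk : k ≠ 0) (i : Fin (d + 1)) :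
    diagRatio (phiDiag p d k) i = if (i : ℕ) < k then 1 else (p : ℝ)⁻¹ := by
  have happly (j : Fin (d + 1)) :
      (phiDiag p d k).val j j = if (j : ℕ) < k then 1 else (p : ℚ_[p]) :=
    Matrix.diagonal_apply_eq _ j
  rw [diagRatio, happly, happly, Fin.val_zero, if_pos (Nat.pos_of_ne_zero hk), norm_one, div_one,
    apply_ite norm, norm_one, Padic.norm_p]

lemma inv_prime_lt_one (p : ℕ) [Fact p.Prime] : (p : ℝ)⁻¹ < 1 :=
  inv_lt_one_of_one_lt₀ (Nat.one_lt_cast.mpr (Fact.out : p.Prime).one_lt)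

lemma diagRatio_phiDiag_le_one {k : ℕ} (hk : k ≠ 0) (i : Fin (d + 1)) :
    diagRatio (phiDiag p d k) i ≤ 1 := by
  rw [diagRatio_phiDiag hk]
  split_ifs
  exacts [le_rfl, (inv_prime_lt_one p).le]

lemma diagRatio_phiDiag_eq_one_iff {k : ℕ} (hk : k ≠ 0) {i : Fin (d + 1)} :
    diagRatio (phiDiag p d k) i = 1 ↔ (i : ℕ) < k := by
  rw [diagRatio_phiDiag hk, ite_eq_left_iff]
  exact ⟨fun h => not_not.mp fun hi => (inv_prime_lt_one p).ne (h hi), fun h hi => absurd h hi⟩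

lemma lt_iff_lt_of_phiDiag_smul_x0_eq {k l : ℕ} (hk : k ≠ 0) (hl : l ≠ 0)
    (hkl : phiDiag p d k • x0 p d = phiDiag p d l • x0 p d) (i : Fin (d + 1)) :
    (i : ℕ) < k ↔ (i : ℕ) < l := by
  rw [← diagRatio_phiDiag_eq_one_iff (p := p) hk, ← diagRatio_phiDiag_eq_one_iff (p := p) hl,
    diagRatio_eq_of_smul_x0_eq (phiDiag_mem_borelSubgroup k) (phiDiag_mem_borelSubgroup l) hkl]

lemma exists_eq_phiDiag_smul_x0_of_mem_etaJ {J : Finset (Fin d)} {x : Vtx p d}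
    (hx : x ∈ etaJ p d J) : ∃ k ≠ 0, x = phiDiag p d k • x0 p d := by
  rcases Finset.mem_insert.mp hx with rfl | hx
  · exact ⟨d + 1, d.succ_ne_zero, by rw [phiDiag_eq_one d.lt_succ_self, one_smul]⟩
  · obtain ⟨j, -, rfl⟩ := Finset.mem_image.mp hx
    exact ⟨j + 1, j.1.succ_ne_zero, rfl⟩

lemma xVtx_injective : Function.Injective (xVtx p d) := fun i j hij => by
  have hlt := lt_iff_lt_of_phiDiag_smul_x0_eq i.1.succ_ne_zero j.1.succ_ne_zero hij
  have hi := hlt i.castSucc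
  have hj := hlt j.castSucc
  simp only [Fin.val_castSucc] at hi hj
  omega

lemma xVtx_ne_x0 (i : Fin d) : xVtx p d i ≠ x0 p d := fun hi => by
  have hi' : phiDiag p d (i + 1) • x0 p d = phiDiag p d (d + 1) • x0 p d := by
    rw [phiDiag_eq_one d.lt_succ_self, one_smul]
    exact hi
  have hlt := lt_iff_lt_of_phiDiag_smul_x0_eq i.1.succ_ne_zero d.succ_ne_zero hi' (Fin.last d)
  rw [Fin.val_last] at hlt
  omega

lemma card_etaJ (J : Finset (Fin d)) : (etaJ p d J).card = J.card + 1 := by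
  rw [etaJ, Finset.card_insert_of_notMem, Finset.card_image_of_injective _ xVtx_injective]
  simp only [Finset.mem_image, xVtx_ne_x0, and_false, exists_false, not_false_eq_true]

lemma x0_mem_etaJ (J : Finset (Fin d)) : x0 p d ∈ etaJ p d J :=
  Finset.mem_insert_self _ _

lemma mem_P₀ZSubgroup_of_smul_etaJ_eq {g : GL' p d} (hg : g ∈ borelSubgroup p d)
    {J J' : Finset (Fin d)} (hJ : g • etaJ p d J = etaJ p d J') : g ∈ P₀ZSubgroup p d := by
  have hgx0 : g • x0 p d ∈ etaJ p d J' := hJ ▸ Finset.smul_mem_smul_finset (x0_mem_etaJ J)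
  obtain ⟨y, hy, hgy⟩ := Finset.mem_smul_finset.mp (hJ.symm ▸ x0_mem_etaJ J' : x0 p d ∈ g • _)
  obtain ⟨k, hk, hgk⟩ := exists_eq_phiDiag_smul_x0_of_mem_etaJ hgx0
  obtain ⟨l, hl, rfl⟩ := exists_eq_phiDiag_smul_x0_of_mem_etaJ hy
  have hratio_k : diagRatio g (Fin.last d) = diagRatio (phiDiag p d k) (Fin.last d) :=
    diagRatio_eq_of_smul_x0_eq hg (phiDiag_mem_borelSubgroup k) hgk _
  have hratio_l : diagRatio g (Fin.last d) * diagRatio (phiDiag p d l) (Fin.last d) = 1 := by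
    rw [← diagRatio_mul hg (phiDiag_mem_borelSubgroup l), ← diagRatio_one (p := p) (Fin.last d)]
    refine diagRatio_eq_of_smul_x0_eq (mul_mem hg (phiDiag_mem_borelSubgroup l))
      (one_mem _) ?_ _
    rw [mul_smul, hgy, one_smul]
  have hk_last : diagRatio (phiDiag p d k) (Fin.last d) = 1 := by
    refine (diagRatio_phiDiag_le_one hk _).antisymm ?_
    rw [← hratio_l, hratio_k]
    exact mul_le_of_le_one_right (div_nonneg (norm_nonneg _) (norm_nonneg _))
      (diagRatio_phiDiag_le_one hl _)
  have hdk : d < k := (diagRatio_phiDiag_eq_one_iff hk).mp hk_last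
  rw [phiDiag_eq_one hdk, one_smul] at hgk
  exact mem_P₀ZSubgroup_iff.mpr ⟨hg, hgk⟩

variable (p d q) in
/-- The simplices `b • η_J` with `b ∈ P_0` and `|J| = q`, which index the summands of `V_q`. -/
def standardSimplices : Set (BTq p d q) :=
  {η | ∃ b ∈ P₀set p d, ∃ J : Finset (Fin d), J.card = q ∧ η.1 = b • etaJ p d J}

lemma mem_P₀ZSubgroup_of_mem_P₀set {b : GL' p d} (hb : b ∈ P₀set p d) : b ∈ P₀ZSubgroup p d :=
  Set.mem_mul.mpr ⟨b, hb, 1, mem_Zset_iff.mpr ⟨1, (one_smul _ _).symm⟩, mul_one b⟩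

lemma mem_P₀ZSubgroup_of_smul_mem_standardSimplices {g : GL' p d} (hg : g ∈ borelSubgroup p d)
    {η : BTq p d q} (hη : η ∈ standardSimplices p d q) (hgη : g • η ∈ standardSimplices p d q) :
    g ∈ P₀ZSubgroup p d := by
  obtain ⟨b, hb, J, -, hbJ⟩ := hη
  obtain ⟨b', hb', J', -, hbJ'⟩ := hgη
  replace hb := mem_P₀ZSubgroup_of_mem_P₀set hb
  replace hb' := mem_P₀ZSubgroup_of_mem_P₀set hb'
  have hgJ : (b'⁻¹ * g * b) • etaJ p d J = etaJ p d J' := by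
    rw [mul_smul, mul_smul, ← hbJ, inv_smul_eq_iff]
    exact hbJ'
  have hmem : b'⁻¹ * g * b ∈ borelSubgroup p d :=
    mul_mem (mul_mem (inv_mem (P₀ZSubgroup_le_borelSubgroup hb')) hg)
      (P₀ZSubgroup_le_borelSubgroup hb)
  have hconj := mem_P₀ZSubgroup_of_smul_etaJ_eq hmem hgJ
  rwa [Subgroup.mul_mem_cancel_right _ hb, Subgroup.mul_mem_cancel_left _ (inv_mem hb')] at hconj

lemma exists_smul_mem_standardSimplices {b : GL' p d} (hb : b ∈ borelSubgroup p d)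
    {J : Finset (Fin d)} {η : BTq p d q} (hη : η.1 = b • etaJ p d J) :
    ∃ g ∈ borelSubgroup p d, g • η ∈ standardSimplices p d q := by
  refine ⟨b⁻¹, inv_mem hb, 1, mem_P₀set_iff_map_L0_eq.mpr ⟨one_mem _, ?_⟩, J, ?_, ?_⟩
  · rw [glMap_one, Submodule.map_id]
  · have hcard := η.2.1
    rw [hη, Finset.card_smul_finset, card_etaJ] at hcard
    exact Nat.succ_injective hcard
  · change b⁻¹ • η.1 = _
    rw [hη, inv_smul_smul, one_smul]

end StandardSimplices

section EquivariantSystem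

variable {p d} {kk} {q : ℕ}

lemma ρ_one_apply {act : GL' p d → Ntype p d → Ntype p d}
    (hact : ∀ b ∈ Pset p d, ∀ x : Ntype p d,
      (act b x).1 = b.val * x.1 * Matrix.diagonal fun i => (b.val i i)⁻¹)
    {ρ : GL' p d → VStSub p d kk →ₗ[kk] VStSub p d kk}
    (hρval : ∀ b ∈ Pset p d, ∀ (f : VStSub p d kk) x, (ρ b f).1 x = f.1 (act b⁻¹ x))
    (f : VStSub p d kk) : ρ 1 f = f := by
  have hone : (1 : GL' p d) ∈ Pset p d := one_mem (borelSubgroup p d)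
  have hact_one (x : Ntype p d) : act 1 x = x := Subtype.ext <| by
    simp [hact 1 hone]
  refine Subtype.ext (LocallyConstant.ext fun x => ?_)
  rw [hρval 1 hone, inv_one, hact_one]

theorem stmt15_general {V : BTq p d q → Type*} [∀ η, AddCommGroup (V η)] [∀ η, Module kk (V η)]
    (hV : ∀ η, Nontrivial (V η) →
      ∃ b ∈ borelSubgroup p d, ∃ J : Finset (Fin d), η.1 = b • etaJ p d J)
    {σ : Representation kk (borelSubgroup p d) (⨁ η, V η)}
    (hσ : ∀ g η v, σ g (DirectSum.lof kk (BTq p d q) V η v) ∈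
      LinearMap.range (DirectSum.lof kk (BTq p d q) V (g • η)))
    {ρW : GL' p d →
      partialSum kk V (standardSimplices p d q) →ₗ[kk] partialSum kk V (standardSimplices p d q)}
    (hρW : ∀ b (hb : b ∈ P₀ZSubgroup p d) w,
      (ρW b w : ⨁ η, V η) = σ ⟨b, P₀ZSubgroup_le_borelSubgroup hb⟩ w)
    {Φ : IndSub (partialSum kk V (standardSimplices p d q)) (P₀ZSubgroup p d)
      (borelSubgroup p d) ρW →ₗ[kk] ⨁ η, V η}
    (hΦ : ∀ (g : borelSubgroup p d) w,
      Φ ⟨_, indDelta_mem_indSub P₀ZSubgroup_le_borelSubgroup hρW g g.2 w⟩ = σ g w) :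
    Function.Bijective Φ := by
  refine bijective_of_indDelta P₀ZSubgroup_le_borelSubgroup hρW hΦ
    (fun _ hw => filterLinearMap_apply_of_mem_partialSum hw)
    (fun g hg w hw => filterLinearMap_apply_eq_zero hσ (fun η hη hgη => hg ?_) hw)
    (iSup_map_partialSum_eq_top hσ fun η hη => ?_)
  · exact mem_P₀ZSubgroup_of_smul_mem_standardSimplices g.2 hη hgη
  · obtain ⟨b, hb, J, hJ⟩ := hV η hη
    obtain ⟨g, hg, hgη⟩ := exists_smul_mem_standardSimplices hb hJ
    exact ⟨⟨g, hg⟩, hgη⟩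

end EquivariantSystem

/-- For every `0 ≤ q ≤ d` the natural `P`-equivariant map
`ind_{P_0Z}^P(V_q) → ⊕_{η ∈ BT_q} V_η` is an isomorphism of smooth `P`-representations,
where `V_q = ⊕_{|J|=q} ⊕_{n₀ ∈ N_0/∩_{j∈J}φ_jN_0φ_j⁻¹} V_{n₀·η_J}` is a
`P_0Z`-subrepresentation of `⊕_{η ∈ BT_q} V_η` on which `Z` acts trivially. -/
theorem stmt15 (p d : ℕ) [Fact (Nat.Prime p)] (hd : 1 ≤ d)
    (kk : Type*) [Field kk] (q : ℕ) (hq : q ≤ d)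
    -- the action of P on N
    (act : GL' p d → Ntype p d → Ntype p d)
    (hact : ∀ b ∈ Pset p d, ∀ x : Ntype p d,
      (act b x).1 = (b : Matrix (Fin (d + 1)) (Fin (d + 1)) ℚ_[p]) * x.1 *
        (Matrix.diagonal fun i => ((b : Matrix (Fin (d + 1)) (Fin (d + 1)) ℚ_[p]) i i)⁻¹))
    -- the coefficient system (V_η)_η
    (Vc : Finset (Vtx p d) → Submodule kk ↥(VStSub p d kk))
    (hVc1 : ∀ b ∈ Pset p d, ∀ J : Finset (Fin d),
      Vc (Finset.image (vAct p d b) (etaJ p d J)) =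
        suppIn p d kk (act b '' (N₀Nset p d ∩ ⋂ j ∈ J, conjN0 p d ((j : ℕ) + 1))))
    (hVc0 : ∀ s : Finset (Vtx p d),
      (¬ ∃ b ∈ Pset p d, ∃ J : Finset (Fin d), s = Finset.image (vAct p d b) (etaJ p d J)) →
      Vc s = ⊥)
    -- the smooth action ρ of P on V_St, and the induced action ρC on ⊕_{η ∈ BT_q} V_η
    (ρ : GL' p d → (↥(VStSub p d kk) →ₗ[kk] ↥(VStSub p d kk)))
    (hρval : ∀ b ∈ Pset p d, ∀ f : ↥(VStSub p d kk), ∀ x : Ntype p d,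
      ((ρ b f : ↥(VStSub p d kk)) : LocallyConstant (Ntype p d) kk) x
        = ((f : ↥(VStSub p d kk)) : LocallyConstant (Ntype p d) kk) (act b⁻¹ x))
    (hρmul : ∀ b ∈ Pset p d, ∀ b' ∈ Pset p d, ρ (b * b') = (ρ b).comp (ρ b'))
    (hVcmap : ∀ b, b ∈ Pset p d → ∀ (s : Finset (Vtx p d)) (v : ↥(VStSub p d kk)),
      v ∈ Vc s → ρ b v ∈ Vc (Finset.image (vAct p d b) s))
    (ρC : GL' p d → (Cc p d kk Vc q →ₗ[kk] Cc p d kk Vc q))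
    (hρC : ∀ b, ∀ hb : b ∈ Pset p d, ∀ (η : BTq p d q)
      (hbη : IsSimpCard p d q (Finset.image (vAct p d b) η.1)) (v : ↥(Vc η.1)),
      ρC b (DirectSum.lof kk (BTq p d q) (fun η' => ↥(Vc η'.1)) η v)
        = DirectSum.lof kk (BTq p d q) (fun η' => ↥(Vc η'.1))
            (⟨Finset.image (vAct p d b) η.1, hbη⟩ : BTq p d q)
            ⟨ρ b v.1, hVcmap b hb η.1 v.1 v.2⟩)
    (hρCmul : ∀ b ∈ Pset p d, ∀ b' ∈ Pset p d, ρC (b * b') = (ρC b).comp (ρC b'))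
    -- closure facts for P and P_0Z, and the restricted action ρW of P_0Z on V_q
    (hPmul : ∀ a ∈ Pset p d, ∀ b ∈ Pset p d, a * b ∈ Pset p d)
    (hPinv : ∀ a ∈ Pset p d, a⁻¹ ∈ Pset p d)
    (hHP : P₀set p d * Zset p d ⊆ Pset p d)
    (hHmul : ∀ a ∈ P₀set p d * Zset p d, ∀ b ∈ P₀set p d * Zset p d,
      a * b ∈ P₀set p d * Zset p d)
    (hHinv : ∀ a ∈ P₀set p d * Zset p d, a⁻¹ ∈ P₀set p d * Zset p d)
    (ρW : GL' p d → (↥(VqSub p d kk Vc q) →ₗ[kk] ↥(VqSub p d kk Vc q)))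
    (hρW : ∀ b ∈ P₀set p d * Zset p d, ∀ w : ↥(VqSub p d kk Vc q),
      ((ρW b w : ↥(VqSub p d kk Vc q)) : Cc p d kk Vc q)
        = ρC b ((w : ↥(VqSub p d kk Vc q)) : Cc p d kk Vc q))
    (hρWmul : ∀ a ∈ P₀set p d * Zset p d, ∀ b ∈ P₀set p d * Zset p d,
      ρW (a * b) = (ρW a).comp (ρW b))
    -- Z acts trivially on V_q
    (hZtriv : ∀ z ∈ Zset p d, ∀ w ∈ VqSub p d kk Vc q, ρC z w = w)
    -- the natural P-equivariant map ind_{P_0Z}^P(V_q) → ⊕_{η ∈ BT_q} V_η,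
    -- characterized on the delta functions spanning the induced representation
    (Φ : ↥(IndSub (↥(VqSub p d kk Vc q)) (P₀set p d * Zset p d) (Pset p d) ρW)
      →ₗ[kk] Cc p d kk Vc q)
    (hΦ : ∀ g, ∀ hg : g ∈ Pset p d, ∀ w : ↥(VqSub p d kk Vc q),
      Φ ⟨indDelta (↥(VqSub p d kk Vc q)) (P₀set p d * Zset p d) ρW g w,
          indDelta_mem (↥(VqSub p d kk Vc q)) (P₀set p d * Zset p d) (Pset p d) ρW
            hHP hPmul hHmul hHinv hρWmul g hg w⟩
        = ρC g ((w : ↥(VqSub p d kk Vc q)) : Cc p d kk Vc q)) :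
    Function.Bijective Φ := by
  have hρ_one := ρ_one_apply hact hρval
  have hρC_one : ρC 1 = 1 := DirectSum.linearMap_ext kk fun η => LinearMap.ext fun v =>
    (hρC 1 (one_mem (borelSubgroup p d)) η (η.2.smul 1) v).trans
      (lof_coe_congr (V := fun η => Vc η.1) (one_smul (GL' p d) η) (hρ_one v.1))
  let σ : Representation kk (borelSubgroup p d) (⨁ η : BTq p d q, Vc η.1) :=
    subgroupRep (M := Cc p d kk Vc q) (borelSubgroup p d) ρC hρC_one hρCmul
  have hV (η : BTq p d q) (hη : Nontrivial (Vc η.1)) :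
      ∃ b ∈ borelSubgroup p d, ∃ J : Finset (Fin d), η.1 = b • etaJ p d J :=
    not_not.mp fun h => Submodule.nontrivial_iff_ne_bot.mp hη (hVc0 η.1 h)
  exact (stmt15_general (V := fun η : BTq p d q => Vc η.1) (σ := σ) (ρW := ρW) hV :)
    (fun g η v => ⟨_, (hρC g g.2 η (η.2.smul g) v).symm⟩) hρW fun g => hΦ g g.2
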